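/- arXiv:2511.11813 — 3 statements merged into one kernel-verified Lean document; each statement's English description precedes it below -/
import Mathlib

section
/- Fix complex numbers x, x', y, y' and suppose the matrices X̃ = xI + 2yZ − X and X́ = x'I + 2y'Z − X are invertible. Let μ : ℂ → ℂ be any function whose complex derivative at every point z is exp((x−x')z + (y−y')z²). Define F(z) = μ(z)·(1 + 2(y−y')·aᵀX̃⁻¹X́⁻¹b) − exp((x−x')z + (y−y')z²)·aᵀX̃⁻¹(zI−Z)⁻¹X́⁻¹b. Then at every complex z for which zI − Z is invertible, F has complex derivative equal to exp((x−x')z + (y−y')z²) · (1 + aᵀX̃⁻¹(zI−Z)⁻¹b) · (1 − aᵀ(zI−Z)⁻¹X́⁻¹b), which is the product ψ_𝒳(x,y,z)·ψ_{𝒳*}(x',−y',−z) of the Calogero–Moser wave function and its adjoint. -/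
/-!
Write `A = xI + 2yZ − X`, `B = x'I + 2y'Z − X`, `S = zI − Z`. Both `[X, Z] = [A, S]` and
`A = B + (x − x' + 2(y − y')z)I − 2(y − y')S` hold by inspection. The first identity and the rank-one
condition give `S⁻¹(baᵀ)S⁻¹ = S⁻¹A − AS⁻¹ − S⁻²`; the second then expresses the product of the two
scalars `aᵀA⁻¹S⁻¹b` and `aᵀS⁻¹B⁻¹b` as a combination of scalars linear in `aᵀ(·)b`
(`inv_mul_rank_one_mul_inv`, `dotProduct_mulVec_mul_dotProduct_mulVec`). On the other side the
derivative of the resolvent is `−S⁻²` (`hasDerivAt_dotProduct_resolvent`), so the product rule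
yields the same combination.
-/

open Matrix

/-- The bilinear form `aᵀ(·)b` of a matrix sandwiching `baᵀ` is a product of two such forms. -/
lemma dotProduct_mulVec_mul_dotProduct_mulVec {N : ℕ} (P Q : Matrix (Fin N) (Fin N) ℂ)
    (a b : Fin N → ℂ) :
    (a ⬝ᵥ P.mulVec b) * (a ⬝ᵥ Q.mulVec b) = a ⬝ᵥ (P * Matrix.vecMulVec b a * Q).mulVec b := by
  rw [← mulVec_mulVec, ← mulVec_mulVec, vecMulVec_mulVec, mulVec_smul, dotProduct_smul]
  simp

/-- A resolvent `(ζI − Z)⁻¹` differentiates to `−(ζI − Z)⁻²`, seen through the form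
`aᵀP(·)Qb`. -/
lemma hasDerivAt_dotProduct_resolvent {N : ℕ} (P Q Z : Matrix (Fin N) (Fin N) ℂ)
    (a b : Fin N → ℂ) (z : ℂ) (hz : IsUnit (z • (1 : Matrix (Fin N) (Fin N) ℂ) - Z)) :
    HasDerivAt (fun ζ : ℂ => a ⬝ᵥ (P * (ζ • 1 - Z)⁻¹ * Q).mulVec b)
      (-(a ⬝ᵥ (P * ((z • 1 - Z)⁻¹ * (z • 1 - Z)⁻¹) * Q).mulVec b)) z := by
  -- Any complete algebra norm will do: the statement is about scalar functions.
  let _ : NormedRing (Matrix (Fin N) (Fin N) ℂ) := Matrix.linftyOpNormedRing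
  let _ : NormedAlgebra ℂ (Matrix (Fin N) (Fin N) ℂ) := Matrix.linftyOpNormedAlgebra
  have : CompleteSpace (Matrix (Fin N) (Fin N) ℂ) := FiniteDimensional.complete ℂ _
  let L : Matrix (Fin N) (Fin N) ℂ →ₗ[ℂ] ℂ :=
    { toFun := fun M => a ⬝ᵥ (P * M * Q).mulVec b
      map_add' := fun M M' => by simp [mul_add, add_mul, add_mulVec, dotProduct_add]
      map_smul' := fun c M => by simp [smul_mulVec, dotProduct_smul] }
  have hmem : z ∈ resolventSet ℂ Z := by
    rw [spectrum.mem_resolventSet_iff, Algebra.algebraMap_eq_smul_one]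
    exact hz
  have hd := (L.toContinuousLinearMap.hasFDerivAt).comp_hasDerivAt z
    (spectrum.hasDerivAt_resolvent_const_left hmem)
  have hres (ζ : ℂ) : resolvent Z ζ = (ζ • (1 : Matrix (Fin N) (Fin N) ℂ) - Z)⁻¹ := by
    rw [resolvent, Algebra.algebraMap_eq_smul_one, nonsing_inv_eq_ringInverse]
  refine (hd.congr_of_eventuallyEq (Filter.Eventually.of_forall fun ζ => ?_)).congr_deriv ?_
  · simp [L, hres]
  · change L (-resolvent Z z ^ 2) = _
    rw [map_neg, hres, sq]
    rfl

/-- The matrix identity behind the theorem, applied with `S = zI − Z`, `A = xI + 2yZ − X`,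
`B = x'I + 2y'Z − X`, `K = baᵀ`, `c = x − x' + 2(y − y')z` and `d = y − y'`. -/
lemma inv_mul_rank_one_mul_inv {N : ℕ} (A B S K : Matrix (Fin N) (Fin N) ℂ) (c d : ℂ)
    (hA : IsUnit A) (hB : IsUnit B) (hS : IsUnit S)
    (hK : K = A * S - S * A - 1) (hAB : A = B + c • 1 - (2 * d) • S) :
    A⁻¹ * S⁻¹ * K * (S⁻¹ * B⁻¹) = A⁻¹ * S⁻¹ + c • (A⁻¹ * S⁻¹ * B⁻¹)
      - (2 * d) • (A⁻¹ * B⁻¹) - S⁻¹ * B⁻¹ - A⁻¹ * (S⁻¹ * S⁻¹) * B⁻¹ := by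
  rw [isUnit_iff_isUnit_det] at hA hB hS
  have hA' := nonsing_inv_mul A hA
  have hS' := nonsing_inv_mul S hS
  have hS'' := mul_nonsing_inv S hS
  have hB' := mul_nonsing_inv B hB
  have h1 : A⁻¹ * S⁻¹ * K * (S⁻¹ * B⁻¹) = A⁻¹ * S⁻¹ * A * (S * S⁻¹) * B⁻¹
      - A⁻¹ * (S⁻¹ * S) * A * S⁻¹ * B⁻¹ - A⁻¹ * (S⁻¹ * S⁻¹) * B⁻¹ := by
    rw [hK]; noncomm_ring
  have h2 : A⁻¹ * S⁻¹ * A * B⁻¹ = A⁻¹ * S⁻¹ * (B * B⁻¹) + c • (A⁻¹ * S⁻¹ * B⁻¹)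
      - (2 * d) • (A⁻¹ * (S⁻¹ * S) * B⁻¹) := by
    have : A⁻¹ * S⁻¹ * A * B⁻¹ = A⁻¹ * S⁻¹ * (B + c • 1 - (2 * d) • S) * B⁻¹ := by rw [← hAB]
    rw [this]
    simp only [mul_add, mul_sub, add_mul, sub_mul, mul_smul_comm, smul_mul_assoc, mul_one,
      Matrix.mul_assoc]
  rw [hB', hS', mul_one, mul_one] at h2
  rw [h1, hS'', hS', mul_one, mul_one, hA', one_mul, h2]

/-- Under the rank-one condition, the explicit function
`F(z) = μ(z)·(1 + 2(y−y')·aᵀX̃⁻¹X́⁻¹b) − exp((x−x')z+(y−y')z²)·aᵀX̃⁻¹(zI−Z)⁻¹X́⁻¹b`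
is an antiderivative (in `z`) of the product `ψ_𝒳(x,y,z)·ψ_{𝒳*}(x',−y',−z)` of the
Calogero–Moser wave function and its adjoint, at every `z` where `zI − Z` is invertible. -/
theorem antiderivative_wave_adjoint_product {N : ℕ} (hN : 0 < N)
    (X Z : Matrix (Fin N) (Fin N) ℂ) (a b : Fin N → ℂ)
    (hrank : X * Z - Z * X - 1 = Matrix.vecMulVec b a)
    (x x' y y' : ℂ)
    (hX1 : IsUnit (x • (1 : Matrix (Fin N) (Fin N) ℂ) + (2 * y) • Z - X))
    (hX2 : IsUnit (x' • (1 : Matrix (Fin N) (Fin N) ℂ) + (2 * y') • Z - X))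
    (μ : ℂ → ℂ)
    (hμ : ∀ z : ℂ, HasDerivAt μ (Complex.exp ((x - x') * z + (y - y') * z ^ 2)) z) :
    ∀ z : ℂ, IsUnit (z • (1 : Matrix (Fin N) (Fin N) ℂ) - Z) →
      HasDerivAt
        (fun ζ : ℂ =>
          μ ζ * (1 + 2 * (y - y') *
              (a ⬝ᵥ ((x • (1 : Matrix (Fin N) (Fin N) ℂ) + (2 * y) • Z - X)⁻¹
                * (x' • 1 + (2 * y') • Z - X)⁻¹).mulVec b))
          - Complex.exp ((x - x') * ζ + (y - y') * ζ ^ 2) *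
              (a ⬝ᵥ ((x • (1 : Matrix (Fin N) (Fin N) ℂ) + (2 * y) • Z - X)⁻¹
                * (ζ • 1 - Z)⁻¹ * (x' • 1 + (2 * y') • Z - X)⁻¹).mulVec b))
        (Complex.exp ((x - x') * z + (y - y') * z ^ 2) *
          (1 + a ⬝ᵥ ((x • (1 : Matrix (Fin N) (Fin N) ℂ) + (2 * y) • Z - X)⁻¹
              * (z • 1 - Z)⁻¹).mulVec b) *
          (1 - a ⬝ᵥ ((z • (1 : Matrix (Fin N) (Fin N) ℂ) - Z)⁻¹
              * (x' • 1 + (2 * y') • Z - X)⁻¹).mulVec b))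
        z := by
  intro z hz
  set A := x • (1 : Matrix (Fin N) (Fin N) ℂ) + (2 * y) • Z - X with hA
  set B := x' • (1 : Matrix (Fin N) (Fin N) ℂ) + (2 * y') • Z - X with hB
  have hK : Matrix.vecMulVec b a = A * (z • 1 - Z) - (z • 1 - Z) * A - 1 := by
    rw [← hrank, hA]
    simp only [mul_add, mul_sub, add_mul, sub_mul, mul_smul_comm, smul_mul_assoc, mul_one, one_mul]
    module
  have hAB : A = B + (x - x' + 2 * (y - y') * z) • 1 - (2 * (y - y')) • (z • 1 - Z) := by
    rw [hA, hB]
    module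
  have key := congrArg (fun M => a ⬝ᵥ M.mulVec b)
    (inv_mul_rank_one_mul_inv A B (z • 1 - Z) _ _ _ hX1 hX2 hz hK hAB)
  simp only [← dotProduct_mulVec_mul_dotProduct_mulVec, add_mulVec, sub_mulVec, smul_mulVec,
    dotProduct_add, dotProduct_sub, dotProduct_smul, smul_eq_mul] at key
  have hexp : HasDerivAt (fun ζ : ℂ => Complex.exp ((x - x') * ζ + (y - y') * ζ ^ 2))
      (Complex.exp ((x - x') * z + (y - y') * z ^ 2) * (x - x' + 2 * (y - y') * z)) z := by
    refine HasDerivAt.cexp ?_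
    refine (((hasDerivAt_id' z).const_mul (x - x')).add
      (((hasDerivAt_id' z).fun_pow 2).const_mul (y - y'))).congr_deriv ?_
    norm_num
    ring
  refine (((hμ z).mul_const _).sub
    (hexp.mul (hasDerivAt_dotProduct_resolvent A⁻¹ B⁻¹ Z a b z hz))).congr_deriv ?_
  linear_combination Complex.exp ((x - x') * z + (y - y') * z ^ 2) * key
end

section
/- Fix complex numbers w, z such that wI − X and zI − Z are invertible, and suppose xI − X − Z is invertible for every real x. Then ∫_{-∞}^{∞} [det(wI−X)·exp(xw − w²/2)·(1 + aᵀ(wI−X)⁻¹(xI−X−Z)⁻¹b)] · [det(zI−Z)·exp(xz − z²/2)·(1 + aᵀ(xI−X−Z)⁻¹(zI−Z)⁻¹b)] · exp(−x²/2) dx = √(2π) · exp(wz) · (det(wI−X)·det(zI−Z) + aᵀ·adj(wI−X)·adj(zI−Z)·b). That is, the Hermite product of the normalized wave functions ⟨ψ̂_{𝒳^♭}(x,−1/2,w), ψ̂_𝒳(x,−1/2,z)⟩_H equals √(2π) times the doubly-normalized wave function ψ̂̂_𝒳(w,0,z). -/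
/-!
Set `W = w - X`, `V = z - Z`, `s = w + z`, `R(x) = (x - X - Z)⁻¹`. The rank-one condition says
`b aᵀ = W V - V W - 1`, and `x - X - Z = W + V + (x - s)`. Substituting both into the product of
the two scalar factors turns it into
`1 + aᵀ W⁻¹ V⁻¹ b - aᵀ W⁻¹ R(x)² V⁻¹ b - (x - s) aᵀ W⁻¹ R(x) V⁻¹ b`
(`inv_mul_commutator_mul_inv` is the noncommutative identity behind this). Since `R' = -R²`, with
`g(x) = aᵀ W⁻¹ R(x) V⁻¹ b` the last two terms are `g'(x) - (x - s) g(x)`, so that their product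
with the Gaussian factor `exp(-x²/2 + s x + d)` is the derivative of `g` times that factor.
As `R` is continuous on `ℝ` and vanishes at infinity, `g` and `g'` are bounded, the total derivative
integrates to zero, and what is left is `1 + aᵀ W⁻¹ V⁻¹ b` times a Gaussian integral. Finally
`det(W) W⁻¹ = adj(W)` and `det(V) V⁻¹ = adj(V)`.
-/

open Matrix MeasureTheory

lemma integral_gaussian_linear (s d : ℂ) :
    ∫ x : ℝ, Complex.exp (-(1 / 2) * (x : ℂ) ^ 2 + s * x + d)
      = (Real.sqrt (2 * Real.pi) : ℂ) * Complex.exp (d + s ^ 2 / 2) := by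
  rw [integral_cexp_quadratic (by norm_num)]
  congr 1
  · rw [Real.sqrt_eq_rpow, Complex.ofReal_cpow (by positivity)]
    push_cast
    congr 1
    ring
  · congr 1
    ring

lemma integrable_gaussian_linear (s d : ℂ) :
    Integrable fun x : ℝ => Complex.exp (-(1 / 2) * (x : ℂ) ^ 2 + s * x + d) :=
  integrable_cexp_quadratic' (by norm_num) s d

lemma integrable_mul_gaussian_linear (s d : ℂ) :
    Integrable fun x : ℝ => (x : ℂ) * Complex.exp (-(1 / 2) * (x : ℂ) ^ 2 + s * x + d) := by
  -- `|x| ≤ exp x + exp (-x)` dominates the integrand by two shifted Gaussians.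
  refine Integrable.mono' ((integrable_gaussian_linear (s + 1) d).norm.add
    (integrable_gaussian_linear (s - 1) d).norm) (by fun_prop) (ae_of_all _ fun x => ?_)
  have h1 : ‖Complex.exp (-(1 / 2) * (x : ℂ) ^ 2 + (s + 1) * x + d)‖
      = Real.exp x * ‖Complex.exp (-(1 / 2) * (x : ℂ) ^ 2 + s * x + d)‖ := by
    have e : -(1 / 2) * (x : ℂ) ^ 2 + (s + 1) * x + d
      = (x : ℂ) + (-(1 / 2) * (x : ℂ) ^ 2 + s * x + d) := by ring
    rw [e, Complex.exp_add, norm_mul, Complex.norm_exp_ofReal]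
  have h2 : ‖Complex.exp (-(1 / 2) * (x : ℂ) ^ 2 + (s - 1) * x + d)‖
      = Real.exp (-x) * ‖Complex.exp (-(1 / 2) * (x : ℂ) ^ 2 + s * x + d)‖ := by
    have e : -(1 / 2) * (x : ℂ) ^ 2 + (s - 1) * x + d
      = ((-x : ℝ) : ℂ) + (-(1 / 2) * (x : ℂ) ^ 2 + s * x + d) := by push_cast; ring
    rw [e, Complex.exp_add, norm_mul, Complex.norm_exp_ofReal]
  simp only [Pi.add_apply]
  rw [h1, h2, norm_mul, ← add_mul, Complex.norm_real, Real.norm_eq_abs]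
  refine mul_le_mul_of_nonneg_right ?_ (norm_nonneg _)
  have := Real.add_one_le_exp x
  have := Real.add_one_le_exp (-x)
  have := Real.exp_pos x
  have := Real.exp_pos (-x)
  rcases abs_cases x with ⟨h, _⟩ | ⟨h, _⟩ <;> linarith

/-- Gaussian integration by parts: `g' - (x - s) g` is orthogonal to the Gaussian factor
`exp(-x²/2 + s x + d)` when `g` and `g'` are bounded. -/
lemma integral_add_deriv_sub_mul_gaussian {g g' : ℝ → ℂ} (hg : ∀ x, HasDerivAt g (g' x) x)
    {C C' : ℝ} (hC : ∀ x, ‖g x‖ ≤ C) (hC' : ∀ x, ‖g' x‖ ≤ C') (s d k : ℂ) :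
    ∫ x : ℝ, (k + (g' x - ((x : ℂ) - s) * g x)) *
        Complex.exp (-(1 / 2) * (x : ℂ) ^ 2 + s * x + d)
      = k * ∫ x : ℝ, Complex.exp (-(1 / 2) * (x : ℂ) ^ 2 + s * x + d) := by
  set E : ℝ → ℂ := fun x => Complex.exp (-(1 / 2) * (x : ℂ) ^ 2 + s * x + d) with hE
  have hEi : Integrable E := integrable_gaussian_linear s d
  have hxEi : Integrable fun x : ℝ => (x : ℂ) * E x := integrable_mul_gaussian_linear s d
  have hgc : Continuous g := continuous_iff_continuousAt.2 fun x => (hg x).continuousAt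
  have hg'm : AEStronglyMeasurable g' volume := by
    have : g' = deriv g := funext fun x => (hg x).deriv.symm
    rw [this]
    exact (measurable_deriv g).aestronglyMeasurable
  have hgE : Integrable fun x => g x * E x :=
    hEi.bdd_mul hgc.aestronglyMeasurable (ae_of_all _ hC)
  have hg'E : Integrable fun x => g' x * E x := hEi.bdd_mul hg'm (ae_of_all _ hC')
  have hgxE : Integrable fun x : ℝ => g x * ((x : ℂ) * E x) :=
    hxEi.bdd_mul hgc.aestronglyMeasurable (ae_of_all _ hC)
  have hdE : ∀ x : ℝ, HasDerivAt E (-((x : ℂ) - s) * E x) x := by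
    intro x
    have h : HasDerivAt (fun y : ℂ => Complex.exp (-(1 / 2) * y ^ 2 + s * y + d))
        (-((x : ℂ) - s) * E x) (x : ℂ) := by
      have h0 := (((((hasDerivAt_id (x : ℂ)).pow 2).const_mul (-(1 / 2) : ℂ)).add
        ((hasDerivAt_id (x : ℂ)).const_mul s)).add_const d).cexp
      refine HasDerivAt.congr_deriv h0 ?_
      simp [hE]
      ring
    exact h.comp_ofReal
  have hint : Integrable fun x : ℝ => (g' x - ((x : ℂ) - s) * g x) * E x := by
    refine ((hg'E.sub hgxE).add (hgE.const_mul s)).congr (ae_of_all _ fun x => ?_)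
    simp only [Pi.add_apply, Pi.sub_apply]
    ring
  have hzero : ∫ x : ℝ, (g' x - ((x : ℂ) - s) * g x) * E x = 0 := by
    refine integral_eq_zero_of_hasDerivAt_of_integrable (f := fun x => g x * E x) (fun x => ?_)
      hint hgE
    refine HasDerivAt.congr_deriv ((hg x).mul (hdE x)) ?_
    ring
  have hsplit : ∀ x : ℝ, (k + (g' x - ((x : ℂ) - s) * g x)) * E x
      = k * E x + (g' x - ((x : ℂ) - s) * g x) * E x := fun x => by ring
  rw [integral_congr_ae (ae_of_all _ hsplit), integral_add (hEi.const_mul k) hint, hzero, add_zero,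
    integral_const_mul]

/-- If the resolvent of `T` exists on all of `ℝ`, it is bounded there, being continuous and
vanishing at infinity. -/
lemma exists_norm_resolvent_le {A : Type*} [NormedRing A] [NormedAlgebra ℝ A] [CompleteSpace A]
    {T : A} (hT : ∀ x : ℝ, x ∈ resolventSet ℝ T) : ∃ C, ∀ x : ℝ, ‖resolvent T x‖ ≤ C := by
  have hc : Continuous fun x : ℝ => resolvent T x := continuous_iff_continuousAt.2 fun x =>
    (spectrum.hasDerivAt_resolvent_const_left (hT x)).continuousAt
  have ht := spectrum.resolvent_tendsto_cobounded (𝕜 := ℝ) T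
  rw [Metric.cobounded_eq_cocompact] at ht
  let F : ZeroAtInftyContinuousMap ℝ A := ⟨⟨_, hc⟩, ht⟩
  exact ⟨‖F.toBCF‖, fun x => F.toBCF.norm_coe_le_norm x⟩

/-- The case `g = φ ∘ R` of `integral_add_deriv_sub_mul_gaussian`, for `R` the resolvent of `T` and
`φ` a linear functional. -/
lemma integral_resolvent_gaussian {A : Type*} [NormedRing A] [NormedAlgebra ℝ A]
    [FiniteDimensional ℝ A] {T : A} (hT : ∀ x : ℝ, x ∈ resolventSet ℝ T) (φ : A →ₗ[ℝ] ℂ)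
    (s d k : ℂ) :
    ∫ x : ℝ, (k + (φ (-resolvent T x ^ 2) - ((x : ℂ) - s) * φ (resolvent T x))) *
        Complex.exp (-(1 / 2) * (x : ℂ) ^ 2 + s * x + d)
      = k * ∫ x : ℝ, Complex.exp (-(1 / 2) * (x : ℂ) ^ 2 + s * x + d) := by
  have : CompleteSpace A := FiniteDimensional.complete ℝ A
  obtain ⟨C, hC⟩ := exists_norm_resolvent_le hT
  let Φ : A →L[ℝ] ℂ := LinearMap.toContinuousLinearMap φ
  have h1 : ∀ x, ‖Φ (resolvent T x)‖ ≤ ‖Φ‖ * C := fun x => Φ.le_opNorm_of_le (hC x)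
  have h2 : ∀ x, ‖Φ (-resolvent T x ^ 2)‖ ≤ ‖Φ‖ * (C * C) := fun x => by
    refine Φ.le_opNorm_of_le ?_
    rw [norm_neg, pow_two]
    exact (norm_mul_le _ _).trans
      (mul_le_mul (hC x) (hC x) (norm_nonneg _) ((norm_nonneg _).trans (hC x)))
  exact integral_add_deriv_sub_mul_gaussian
    (fun x => Φ.hasFDerivAt.comp_hasDerivAt x
      (spectrum.hasDerivAt_resolvent_const_left (hT x))) h1 h2 s d k

/-- With `M = W + V + t`, `t` central and `R = M⁻¹`, one has `[W, V] = [W, M]`, hence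
`R [W, V] R = R W - W R`: the left-hand side becomes linear in `R` apart from the term `-R ^ 2`. -/
lemma inv_mul_commutator_mul_inv {A : Type*} [Ring A] {W W' V V' R t : A}
    (hW : W' * W = 1) (hV : V * V' = 1)
    (ht : ∀ y, Commute t y) (hM : (W + V + t) * R = 1) (hM' : R * (W + V + t) = 1) :
    W' * R + R * V' + W' * R * (W * V - V * W - 1) * R * V'
      = W' * V' + (W' * (-R ^ 2) * V' - t * (W' * R * V')) := by
  have hc : W * V - V * W = W * (W + V + t) - (W + V + t) * W := by
    have := (ht W).eq
    simp only [mul_add, add_mul, this]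
    abel
  have hR : R * (W * V - V * W - 1) * R = R * W - W * R - R ^ 2 := by
    rw [hc]
    calc R * (W * (W + V + t) - (W + V + t) * W - 1) * R
        = R * W * ((W + V + t) * R) - (R * (W + V + t)) * W * R - R ^ 2 := by noncomm_ring
      _ = _ := by rw [hM, hM', mul_one, one_mul]
  have h1 : W' * R = W' * R * V * V' := by rw [mul_assoc _ V, hV, mul_one]
  have h2 : R * V' = W' * W * R * V' := by rw [hW, one_mul]
  have h3 : W' * V' = W' * (R * (W + V + t)) * V' := by rw [hM', mul_one]
  have h4 : t * (W' * R * V') = W' * R * t * V' := by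
    rw [← mul_assoc t, (ht (W' * R)).eq]
  calc W' * R + R * V' + W' * R * (W * V - V * W - 1) * R * V'
      = W' * R + R * V' + W' * (R * (W * V - V * W - 1) * R) * V' := by simp only [mul_assoc]
    _ = W' * R * V * V' + W' * W * R * V' + W' * (R * W - W * R - R ^ 2) * V' := by
        rw [hR, ← h1, ← h2]
    _ = _ := by
        rw [h3, h4]
        noncomm_ring

/-- The linear functional `M ↦ aᵀ P M Q b` on matrices. -/
def sandwich {N : ℕ} (a b : Fin N → ℂ) (P Q : Matrix (Fin N) (Fin N) ℂ) :
    Matrix (Fin N) (Fin N) ℂ →ₗ[ℝ] ℂ where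
  toFun M := a ⬝ᵥ (P * M * Q).mulVec b
  map_add' M M' := by simp [mul_add, add_mul, add_mulVec, dotProduct_add]
  map_smul' r M := by simp [smul_mulVec, dotProduct_smul]

/-- The product of the two scalar factors of the wave functions, rewritten with
`inv_mul_commutator_mul_inv`. -/
lemma wave_factor_mul {N : ℕ} {X Z : Matrix (Fin N) (Fin N) ℂ} {a b : Fin N → ℂ}
    (hrank : X * Z - Z * X - 1 = Matrix.vecMulVec b a) {w z : ℂ}
    (hW : IsUnit (w • (1 : Matrix (Fin N) (Fin N) ℂ) - X))
    (hZ : IsUnit (z • (1 : Matrix (Fin N) (Fin N) ℂ) - Z)) {x : ℂ}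
    (hXZ : IsUnit (x • (1 : Matrix (Fin N) (Fin N) ℂ) - X - Z)) :
    (1 + a ⬝ᵥ ((w • (1 : Matrix (Fin N) (Fin N) ℂ) - X)⁻¹ * (x • 1 - X - Z)⁻¹).mulVec b) *
      (1 + a ⬝ᵥ ((x • (1 : Matrix (Fin N) (Fin N) ℂ) - X - Z)⁻¹ * (z • 1 - Z)⁻¹).mulVec b)
    = (1 + a ⬝ᵥ ((w • (1 : Matrix (Fin N) (Fin N) ℂ) - X)⁻¹ * (z • 1 - Z)⁻¹).mulVec b) +
      (sandwich a b (w • 1 - X)⁻¹ (z • 1 - Z)⁻¹ (-(x • 1 - X - Z)⁻¹ ^ 2)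
        - (x - (w + z)) * sandwich a b (w • 1 - X)⁻¹ (z • 1 - Z)⁻¹ (x • 1 - X - Z)⁻¹) := by
  rw [Matrix.isUnit_iff_isUnit_det] at hW hZ hXZ
  have hWV : vecMulVec b a = (w • (1 : Matrix (Fin N) (Fin N) ℂ) - X) * (z • 1 - Z)
      - (z • 1 - Z) * (w • 1 - X) - 1 := by
    rw [← hrank]
    simp only [mul_sub, sub_mul, smul_mul_assoc, mul_smul_comm, one_mul, mul_one, smul_sub]
    rw [smul_comm w z]
    abel
  have hM : x • (1 : Matrix (Fin N) (Fin N) ℂ) - X - Z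
      = (w • 1 - X) + (z • 1 - Z) + (x - (w + z)) • 1 := by
    rw [sub_smul, add_smul]
    abel
  have key := inv_mul_commutator_mul_inv (t := (x - (w + z)) • (1 : Matrix (Fin N) (Fin N) ℂ))
    (nonsing_inv_mul _ hW) (mul_nonsing_inv _ hZ) (fun y => (Commute.one_left y).smul_left _)
    (by rw [← hM]; exact mul_nonsing_inv _ hXZ) (by rw [← hM]; exact nonsing_inv_mul _ hXZ)
  rw [← hWV] at key
  simp only [sandwich, LinearMap.coe_mk, AddHom.coe_mk]
  generalize (w • (1 : Matrix (Fin N) (Fin N) ℂ) - X)⁻¹ = W' at *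
  generalize (z • (1 : Matrix (Fin N) (Fin N) ℂ) - Z)⁻¹ = V' at *
  generalize (x • (1 : Matrix (Fin N) (Fin N) ℂ) - X - Z)⁻¹ = R at *
  have hprod : a ⬝ᵥ (W' * R * vecMulVec b a * R * V').mulVec b
      = (a ⬝ᵥ (W' * R).mulVec b) * (a ⬝ᵥ (R * V').mulVec b) := by
    rw [mul_assoc _ R V', mul_vecMulVec, vecMulVec_mul, vecMulVec_mulVec, dotProduct_mulVec a (R * V')]
    simp [dotProduct_smul, mul_comm]
  have key' := congrArg (fun M : Matrix (Fin N) (Fin N) ℂ => a ⬝ᵥ M.mulVec b) key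
  simp only [add_mulVec, sub_mulVec, dotProduct_add, dotProduct_sub, hprod, smul_mul_assoc,
    one_mul, smul_mulVec, dotProduct_smul, smul_eq_mul] at key'
  linear_combination key'

/-- The Hermite product of the normalized wave functions
`⟨ψ̂_{𝒳^♭}(x,−1/2,w), ψ̂_𝒳(x,−1/2,z)⟩_H` equals `√(2π)` times the doubly-normalized
wave function `ψ̂̂_𝒳(w,0,z) = exp(wz)·(det(wI−X)·det(zI−Z) + aᵀ·adj(wI−X)·adj(zI−Z)·b)`. -/
theorem hermite_product_normalized_wave {N : ℕ} (hN : 0 < N)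
    (X Z : Matrix (Fin N) (Fin N) ℂ) (a b : Fin N → ℂ)
    (hrank : X * Z - Z * X - 1 = Matrix.vecMulVec b a)
    (w z : ℂ)
    (hW : IsUnit (w • (1 : Matrix (Fin N) (Fin N) ℂ) - X))
    (hZ : IsUnit (z • (1 : Matrix (Fin N) (Fin N) ℂ) - Z))
    (hXZ : ∀ x : ℝ, IsUnit ((x : ℂ) • (1 : Matrix (Fin N) (Fin N) ℂ) - X - Z)) :
    (∫ x : ℝ,
      ((w • (1 : Matrix (Fin N) (Fin N) ℂ) - X).det * Complex.exp ((x : ℂ) * w - w ^ 2 / 2) *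
          (1 + a ⬝ᵥ ((w • (1 : Matrix (Fin N) (Fin N) ℂ) - X)⁻¹
              * ((x : ℂ) • 1 - X - Z)⁻¹).mulVec b)) *
      ((z • (1 : Matrix (Fin N) (Fin N) ℂ) - Z).det * Complex.exp ((x : ℂ) * z - z ^ 2 / 2) *
          (1 + a ⬝ᵥ (((x : ℂ) • (1 : Matrix (Fin N) (Fin N) ℂ) - X - Z)⁻¹
              * (z • 1 - Z)⁻¹).mulVec b)) *
      Complex.exp (-(x : ℂ) ^ 2 / 2))
    = (Real.sqrt (2 * Real.pi) : ℂ) * Complex.exp (w * z) *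
        ((w • (1 : Matrix (Fin N) (Fin N) ℂ) - X).det * (z • (1 : Matrix (Fin N) (Fin N) ℂ) - Z).det
          + a ⬝ᵥ ((w • (1 : Matrix (Fin N) (Fin N) ℂ) - X).adjugate
              * (z • (1 : Matrix (Fin N) (Fin N) ℂ) - Z).adjugate).mulVec b) := by
  set s : ℂ := w + z with hs
  set d : ℂ := -(w ^ 2 / 2) - z ^ 2 / 2 with hd
  set W := w • (1 : Matrix (Fin N) (Fin N) ℂ) - X with hWdef
  set V := z • (1 : Matrix (Fin N) (Fin N) ℂ) - Z with hVdef
  let _ : NormedRing (Matrix (Fin N) (Fin N) ℂ) := Matrix.linftyOpNormedRing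
  let _ : NormedAlgebra ℝ (Matrix (Fin N) (Fin N) ℂ) := Matrix.linftyOpNormedAlgebra
  have hMx : ∀ x : ℝ, algebraMap ℝ (Matrix (Fin N) (Fin N) ℂ) x - (X + Z)
      = (x : ℂ) • 1 - X - Z := by
    intro x
    rw [sub_sub, Algebra.algebraMap_eq_smul_one]
    rfl
  have hT : ∀ x : ℝ, x ∈ resolventSet ℝ (X + Z) := fun x => by
    rw [spectrum.mem_resolventSet_iff, hMx]
    exact hXZ x
  have hres : ∀ x : ℝ, resolvent (X + Z) x = ((x : ℂ) • 1 - X - Z)⁻¹ := fun x => by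
    rw [resolvent, hMx, nonsing_inv_eq_ringInverse]
  have hint := integral_resolvent_gaussian hT (sandwich a b W⁻¹ V⁻¹) s d
    (1 + a ⬝ᵥ (W⁻¹ * V⁻¹).mulVec b)
  rw [integral_gaussian_linear] at hint
  have hpt : ∀ x : ℝ,
      (W.det * Complex.exp ((x : ℂ) * w - w ^ 2 / 2) *
          (1 + a ⬝ᵥ (W⁻¹ * ((x : ℂ) • 1 - X - Z)⁻¹).mulVec b)) *
      (V.det * Complex.exp ((x : ℂ) * z - z ^ 2 / 2) *
          (1 + a ⬝ᵥ (((x : ℂ) • (1 : Matrix (Fin N) (Fin N) ℂ) - X - Z)⁻¹ * V⁻¹).mulVec b)) *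
      Complex.exp (-(x : ℂ) ^ 2 / 2)
      = (W.det * V.det) * (((1 + a ⬝ᵥ (W⁻¹ * V⁻¹).mulVec b) +
        (sandwich a b W⁻¹ V⁻¹ (-resolvent (X + Z) x ^ 2)
          - ((x : ℂ) - s) * sandwich a b W⁻¹ V⁻¹ (resolvent (X + Z) x))) *
        Complex.exp (-(1 / 2) * (x : ℂ) ^ 2 + s * x + d)) := by
    intro x
    have hexp : Complex.exp (-(1 / 2) * (x : ℂ) ^ 2 + s * x + d)
        = Complex.exp ((x : ℂ) * w - w ^ 2 / 2) * Complex.exp ((x : ℂ) * z - z ^ 2 / 2)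
          * Complex.exp (-(x : ℂ) ^ 2 / 2) := by
      rw [← Complex.exp_add, ← Complex.exp_add]
      congr 1
      rw [hs, hd]
      ring
    rw [hres, hexp, hs, ← wave_factor_mul hrank hW hZ (hXZ x)]
    ring
  have hadj : ∀ M : Matrix (Fin N) (Fin N) ℂ, IsUnit M → M.adjugate = M.det • M⁻¹ := by
    intro M hM
    rw [Matrix.isUnit_iff_isUnit_det] at hM
    rw [Matrix.inv_def, smul_smul, Ring.mul_inverse_cancel _ hM, one_smul]
  have hds : d + s ^ 2 / 2 = w * z := by
    rw [hs, hd]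
    ring
  rw [integral_congr_ae (ae_of_all _ hpt), integral_const_mul, hint, hds, hadj W hW, hadj V hZ]
  simp only [smul_mul_assoc, mul_smul_comm, smul_mulVec, dotProduct_smul, smul_eq_mul]
  ring
end

section
/- Suppose xI − X − Z is invertible for every real x. For each natural number m define f̂_m(x) = (1/m!) times the m-th derivative at w = 0 of the function w ↦ exp(xw − w²/2)·(det(wI−X) + aᵀ·adj(wI−X)·(xI−X−Z)⁻¹·b), and for each natural number n define ĝ_n(x) = (1/n!) times the n-th derivative at z = 0 of the function z ↦ exp(xz − z²/2)·(det(zI−Z) + aᵀ·(xI−X−Z)⁻¹·adj(zI−Z)·b). Define Q(w,z) = det(wI−X)·det(zI−Z) + aᵀ·adj(wI−X)·adj(zI−Z)·b and let c_{ij} = (1/(i!·j!))·∂_w^i∂_z^j Q(0,0) for 0 ≤ i,j ≤ N. If m, n are natural numbers with m − n ≠ i − j (as integers) for every pair (i,j) with 0 ≤ i,j ≤ N and c_{ij} ≠ 0, then ∫_{-∞}^{∞} f̂_m(x)·ĝ_n(x)·exp(−x²/2) dx = 0. In particular the sequences {f̂_m} and {ĝ_n} are almost bi-orthogonal with respect to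 the Hermite product: their matrix of products is a finite band matrix with at most N nonzero sub- and super-diagonals. -/
open Matrix MeasureTheory

/-!
Put `W = w I - X`, `V = z I - Z`, `R = (x I - X - Z)⁻¹` and `s = x - w - z`. The generating function
of the products `f m * g n` against the weight is `exp (w z) exp (-s² / 2) F G`, with
`F = det W + aᵀ adj W R b` and `G = det V + aᵀ R adj V b`. The rank-one condition gives
`F G = Q(w, z) + ∂ₓ h - s h` with `h = aᵀ adj W R adj V b`, so that the weighted product is
`exp (w z) (exp (-s² / 2) Q + ∂ₓ (exp (-s² / 2) h))`. The total derivative integrates to zero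
because `R` vanishes at infinity, and the rest integrates to `√(2π) exp (w z) Q(w, z)`, whose
coefficient at `w ^ m z ^ n` only involves the `c_{ij}` with `m - n = i - j`.

The argument is carried out coefficient by coefficient in `w` and `z`, which avoids exchanging
derivatives and integrals. The coefficients of `exp (x w - w² / 2)` are Hermite polynomials, and
multiplication by `w` becomes differentiation in `x` (`hermConv_X_mul`). The factorization of `F G`
then is the matrix identity `key_identity`, and the integral of `exp (w z) exp (-s² / 2) Q` becomes
orthogonality of Hermite polynomials (`integral_herm_mul_herm`).
-/

/-! ### Hermite polynomials -/

/-- The scaled Hermite polynomial `He_n / n!`, with generating function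
`∑ herm n (x) wⁿ = exp (x w - w² / 2)`, defined through its three-term recurrence. -/
noncomputable def herm : ℕ → Polynomial ℂ
  | 0 => 1
  | 1 => Polynomial.X
  | (n + 2) => Polynomial.C (1 / ((n : ℂ) + 2)) * (Polynomial.X * herm (n + 1) - herm n)

theorem herm_rec (n : ℕ) :
    Polynomial.C ((n : ℂ) + 2) * herm (n + 2) = Polynomial.X * herm (n + 1) - herm n := by
  have h : (n : ℂ) + 2 ≠ 0 := by exact_mod_cast Nat.succ_ne_zero (n + 1)
  rw [herm, ← mul_assoc, ← Polynomial.C_mul, mul_one_div_cancel h, Polynomial.C_1, one_mul]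

/-- Coefficientwise form of `∂ₓ exp (x w - w² / 2) = w exp (x w - w² / 2)`. -/
theorem derivative_herm (n : ℕ) : Polynomial.derivative (herm (n + 1)) = herm n := by
  induction n using Nat.strong_induction_on with
  | _ n ih =>
    match n with
    | 0 => simp [herm]
    | 1 =>
      have := ih 0 (by norm_num)
      simp [herm]
      rw [← two_mul, ← mul_assoc, ← map_ofNat (Polynomial.C), ← Polynomial.C_mul]
      norm_num
    | (k + 2) =>
      have h1 := ih (k + 1) (by omega)
      have h2 := ih k (by omega)
      have h : ((k + 1 : ℕ) : ℂ) + 2 ≠ 0 := by exact_mod_cast Nat.succ_ne_zero (k + 2)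
      have hr := congrArg Polynomial.derivative (herm_rec (k + 1))
      have hr' := herm_rec k
      have hC : Polynomial.C (((k + 1 : ℕ) : ℂ) + 2) ≠ 0 := Polynomial.C_ne_zero.2 h
      apply mul_left_cancel₀ hC
      simp only [Polynomial.derivative_mul, Polynomial.derivative_C, Polynomial.derivative_sub,
        Polynomial.derivative_X, h1, h2] at hr
      push_cast at hr hr' ⊢
      simp only [map_add, map_one] at hr hr' ⊢
      linear_combination hr - hr'

theorem derivative_herm_zero : Polynomial.derivative (herm 0) = 0 := by simp [herm]

/-! ### Taylor coefficients of the generating functions -/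

/-- The `m`-th Taylor coefficient of `φ` at `0`. -/
noncomputable def taylorCoeff (m : ℕ) (φ : ℂ → ℂ) : ℂ := (1 / (m.factorial : ℂ)) * iteratedDeriv m φ 0

theorem taylorCoeff_mul (m : ℕ) {φ ψ : ℂ → ℂ} (hφ : ContDiff ℂ ⊤ φ) (hψ : ContDiff ℂ ⊤ ψ) :
    taylorCoeff m (fun w => φ w * ψ w) = ∑ p ∈ Finset.HasAntidiagonal.antidiagonal m, taylorCoeff p.1 φ * taylorCoeff p.2 ψ := by
  have := iteratedDeriv_mul (n := m) (x := (0 : ℂ)) (f := φ) (g := ψ)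
    (hφ.of_le le_top).contDiffAt (hψ.of_le le_top).contDiffAt
  unfold taylorCoeff
  change 1 / _ * iteratedDeriv m (φ * ψ) 0 = _
  rw [this, Finset.Nat.sum_antidiagonal_eq_sum_range_succ_mk, Finset.mul_sum]
  refine Finset.sum_congr rfl fun i hi => ?_
  have hi : i ≤ m := by simpa [Nat.lt_succ_iff] using hi
  rw [Nat.cast_choose ℂ hi]
  have := Nat.cast_ne_zero (R := ℂ).2 m.factorial_ne_zero
  have := Nat.cast_ne_zero (R := ℂ).2 i.factorial_ne_zero
  have := Nat.cast_ne_zero (R := ℂ).2 (m - i).factorial_ne_zero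
  field_simp

theorem iteratedDeriv_eval (p : Polynomial ℂ) (k : ℕ) :
    iteratedDeriv k (fun w => p.eval w) = fun w => (Polynomial.derivative^[k] p).eval w := by
  induction k with
  | zero => simp
  | succ k ih =>
    rw [iteratedDeriv_succ, ih, Function.iterate_succ_apply']
    funext w
    simp

theorem taylorCoeff_eval (p : Polynomial ℂ) (k : ℕ) : taylorCoeff k (fun w => p.eval w) = p.coeff k := by
  have := Nat.cast_ne_zero (R := ℂ).2 k.factorial_ne_zero
  rw [taylorCoeff, iteratedDeriv_eval]
  simp only
  rw [← Polynomial.coeff_zero_eq_eval_zero, Polynomial.coeff_iterate_derivative]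
  simp [Nat.descFactorial_self]
  field_simp

theorem contDiff_E (x : ℂ) : ContDiff ℂ ⊤ (fun w : ℂ => Complex.exp (x * w - w ^ 2 / 2)) := by
  fun_prop

theorem contDiff_eval (p : Polynomial ℂ) : ContDiff ℂ ⊤ (fun w : ℂ => p.eval w) := by
  simpa using p.contDiff_aeval (𝕜 := ℂ) ⊤

theorem taylorCoeff_succ_deriv (m : ℕ) (φ : ℂ → ℂ) : ((m : ℂ) + 1) * taylorCoeff (m + 1) φ = taylorCoeff m (deriv φ) := by
  have := Nat.cast_ne_zero (R := ℂ).2 m.factorial_ne_zero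
  have h : (m : ℂ) + 1 ≠ 0 := by exact_mod_cast Nat.succ_ne_zero m
  rw [taylorCoeff, taylorCoeff, iteratedDeriv_succ', Nat.factorial_succ]
  push_cast
  field_simp

theorem taylorCoeff_E (x : ℂ) (k : ℕ) :
    taylorCoeff k (fun w : ℂ => Complex.exp (x * w - w ^ 2 / 2)) = (herm k).eval x := by
  have hd : deriv (fun w : ℂ => Complex.exp (x * w - w ^ 2 / 2)) =
      fun w => Complex.exp (x * w - w ^ 2 / 2) * (Polynomial.C x - Polynomial.X).eval w := by
    funext w
    have : HasDerivAt (fun w : ℂ => x * w - w ^ 2 / 2) (x - w) w := by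
      have := ((hasDerivAt_id w).const_mul x).sub (((hasDerivAt_id w).pow 2).div_const 2)
      convert! this using 1
      simp
    simp [this.cexp.deriv]
  have hrec : ∀ m : ℕ, ((m : ℂ) + 1) * taylorCoeff (m + 1) (fun w : ℂ => Complex.exp (x * w - w ^ 2 / 2))
      = ∑ p ∈ Finset.HasAntidiagonal.antidiagonal m, taylorCoeff p.1 (fun w : ℂ => Complex.exp (x * w - w ^ 2 / 2)) *
        (Polynomial.C x - Polynomial.X).coeff p.2 := by
    intro m
    rw [taylorCoeff_succ_deriv, hd, taylorCoeff_mul m (contDiff_E x) (contDiff_eval _)]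
    simp only [taylorCoeff_eval]
  have h0 : taylorCoeff 0 (fun w : ℂ => Complex.exp (x * w - w ^ 2 / 2)) = 1 := by simp [taylorCoeff]
  induction k using Nat.strong_induction_on with
  | _ k ih =>
    match k with
    | 0 => simp [h0, herm]
    | 1 =>
      have := hrec 0
      simpa [h0, herm] using this
    | (k + 2) =>
      have h := hrec (k + 1)
      rw [Finset.Nat.sum_antidiagonal_eq_sum_range_succ_mk, Finset.sum_range_succ,
        Finset.sum_range_succ, Finset.sum_eq_zero] at h
      · simp [Polynomial.coeff_X, ih k (by omega), ih (k + 1) (by omega)] at h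
        have hr := congrArg (Polynomial.eval x) (herm_rec k)
        simp at hr
        have hk : (k : ℂ) + 2 ≠ 0 := by exact_mod_cast Nat.succ_ne_zero (k + 1)
        apply mul_left_cancel₀ hk
        rw [hr]
        linear_combination h
      · intro i hi
        have hi : i < k := by simpa using hi
        have h1 : k + 1 - i ≠ 0 := by omega
        have h2 : 1 ≠ k + 1 - i := by omega
        simp [Polynomial.coeff_X, Polynomial.coeff_C, h1, h2]

/-- The polynomial in `x` that is the coefficient of `w ^ m` in `exp (x w - w² / 2) * p(w)`,
as a linear function of `p`. -/
noncomputable def hermConv (m : ℕ) : Polynomial ℂ →ₗ[ℂ] Polynomial ℂ where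
  toFun p := ∑ q ∈ Finset.HasAntidiagonal.antidiagonal m, p.coeff q.1 • herm q.2
  map_add' p p' := by simp [add_smul, Finset.sum_add_distrib]
  map_smul' c p := by simp [mul_smul, Finset.smul_sum]

theorem hermConv_apply (m : ℕ) (p : Polynomial ℂ) :
    hermConv m p = ∑ q ∈ Finset.HasAntidiagonal.antidiagonal m, p.coeff q.1 • herm q.2 := rfl

/-- Multiplication by `w` acts on coefficients as `∂ₓ`, since
`w exp (x w - w² / 2) = ∂ₓ exp (x w - w² / 2)`. -/
theorem hermConv_X_mul (m : ℕ) (p : Polynomial ℂ) :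
    hermConv m (Polynomial.X * p) = Polynomial.derivative (hermConv m p) := by
  cases m with
  | zero => simp [hermConv_apply, derivative_herm_zero]
  | succ m =>
    rw [hermConv_apply, hermConv_apply, Finset.Nat.sum_antidiagonal_succ, Finset.Nat.sum_antidiagonal_succ']
    simp [derivative_herm, derivative_herm_zero]

theorem taylorCoeff_E_mul (x : ℂ) (m : ℕ) (p : Polynomial ℂ) :
    taylorCoeff m (fun w => Complex.exp (x * w - w ^ 2 / 2) * p.eval w) = (hermConv m p).eval x := by
  rw [taylorCoeff_mul m (contDiff_E x) (contDiff_eval p), hermConv_apply, Polynomial.eval_finsetSum,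
    ← Finset.Nat.sum_antidiagonal_swap]
  simp [taylorCoeff_E, taylorCoeff_eval, mul_comm]

/-! ### Gaussian integrals and orthogonality -/

/-- The Gaussian weight `exp (-x² / 2)`. -/
noncomputable def gw (x : ℝ) : ℂ := Complex.exp (-(x : ℂ) ^ 2 / 2)

theorem hasDerivAt_gw (x : ℝ) : HasDerivAt gw (-(x : ℂ) * gw x) x := by
  have h : HasDerivAt (fun x : ℝ => -(x : ℂ) ^ 2 / 2) (-(x : ℂ)) x := by
    have := (((Complex.ofRealCLM.hasDerivAt (x := x)).pow 2).neg).div_const 2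
    convert! this using 1
    simp
    ring
  have := h.cexp
  unfold gw
  rwa [mul_comm]

theorem hasDerivAt_eval (p : Polynomial ℂ) (x : ℝ) :
    HasDerivAt (fun t : ℝ => p.eval (t : ℂ)) (p.derivative.eval (x : ℂ)) x :=
  (p.hasDerivAt (x : ℂ)).comp_ofReal

theorem norm_pow_mul_gw (k : ℕ) (x : ℝ) :
    ‖(x : ℂ) ^ k * gw x‖ = |x| ^ (k : ℝ) * Real.exp (-(1 / 2) * x ^ 2) := by
  rw [gw, norm_mul, norm_pow, Complex.norm_real, Complex.norm_exp, Real.rpow_natCast,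
    Real.norm_eq_abs]
  congr 2
  have : -(x : ℂ) ^ 2 / 2 = ((-(1 / 2) * x ^ 2 : ℝ) : ℂ) := by push_cast; ring
  rw [this, Complex.ofReal_re]

theorem continuous_gw : Continuous gw := by unfold gw; fun_prop

theorem tendsto_eval_mul_gw (p : Polynomial ℂ) :
    Filter.Tendsto (fun x : ℝ => p.eval (x : ℂ) * gw x) (Filter.cocompact ℝ) (nhds 0) := by
  induction p using Polynomial.induction_on' with
  | add p q hp hq => simpa [add_mul] using hp.add hq
  | monomial k c =>
    have h := tendsto_rpow_abs_mul_exp_neg_mul_sq_cocompact (a := 1 / 2) (by norm_num) k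
    simp only [← norm_pow_mul_gw] at h
    simpa [mul_assoc] using (tendsto_zero_iff_norm_tendsto_zero.2 h).const_mul c

theorem integrable_eval_mul_gw (p : Polynomial ℂ) :
    Integrable (fun x : ℝ => p.eval (x : ℂ) * gw x) := by
  induction p using Polynomial.induction_on' with
  | add p q hp hq =>
    simp only [Polynomial.eval_add, add_mul]
    exact hp.add hq
  | monomial k c =>
    have h : Integrable (fun x : ℝ => (x : ℂ) ^ k * gw x) := by
      have h1 := (integrable_rpow_mul_exp_neg_mul_sq (b := 1 / 2) (by norm_num)
        (s := k) (by linarith [k.cast_nonneg (α := ℝ)])).norm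
      refine h1.mono' ?_ ?_
      · have := continuous_gw
        exact Continuous.aestronglyMeasurable (by fun_prop)
      · refine Filter.Eventually.of_forall fun x => ?_
        rw [norm_pow_mul_gw]
        simp [abs_of_pos (Real.exp_pos _)]
    simpa [mul_assoc] using h.const_mul c

theorem integral_derivative_sub (p : Polynomial ℂ) :
    ∫ x : ℝ, (p.derivative - Polynomial.X * p).eval (x : ℂ) * gw x = 0 := by
  have ht := tendsto_eval_mul_gw p
  rw [cocompact_eq_atBot_atTop] at ht
  have := integral_of_hasDerivAt_of_tendsto
    (f := fun x : ℝ => p.eval (x : ℂ) * gw x) (fun x => ?_)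
    (integrable_eval_mul_gw (p.derivative - Polynomial.X * p))
    (ht.mono_left le_sup_left) (ht.mono_left le_sup_right)
  · simpa using this
  · convert! (hasDerivAt_eval p x).mul (hasDerivAt_gw x) using 1
    simp
    ring

/-- The raising relation: `(k + 1) herm (k + 1) = x herm k - (herm k)'`. -/
theorem herm_succ (k : ℕ) : Polynomial.C ((k : ℂ) + 1) * herm (k + 1) =
    Polynomial.X * herm k - (herm k).derivative := by
  cases k with
  | zero => simp [herm]
  | succ k =>
    rw [derivative_herm, ← herm_rec]
    push_cast
    congr 2
    ring

/-- Integration by parts with `(herm k * gw)' = -(k + 1) herm (k + 1) * gw`. -/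
theorem integral_herm_succ_mul (k : ℕ) (p : Polynomial ℂ) :
    ((k : ℂ) + 1) * ∫ x : ℝ, (herm (k + 1) * p).eval (x : ℂ) * gw x =
      ∫ x : ℝ, (herm k * p.derivative).eval (x : ℂ) * gw x := by
  have h := integral_derivative_sub (herm k * p)
  have e : (herm k * p).derivative - Polynomial.X * (herm k * p) =
      herm k * p.derivative - Polynomial.C ((k : ℂ) + 1) * (herm (k + 1) * p) := by
    rw [← mul_assoc (Polynomial.C _), herm_succ, Polynomial.derivative_mul]
    ring
  rw [e] at h
  simp only [Polynomial.eval_sub, sub_mul] at h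
  rw [integral_sub (integrable_eval_mul_gw _) (integrable_eval_mul_gw _), sub_eq_zero] at h
  rw [h, ← integral_const_mul]
  simp [mul_assoc]

theorem integral_herm_mul_herm_of_lt (k l : ℕ) (hkl : l < k) :
    ∫ x : ℝ, (herm k * herm l).eval (x : ℂ) * gw x = 0 := by
  induction k generalizing l with
  | zero => omega
  | succ k ih =>
    have hk : (k : ℂ) + 1 ≠ 0 := by exact_mod_cast Nat.succ_ne_zero k
    apply (mul_eq_zero.1 ?_).resolve_left hk
    rw [integral_herm_succ_mul]
    cases l with
    | zero => simp [derivative_herm_zero]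
    | succ l => rw [derivative_herm]; exact ih l (by omega)

theorem integral_herm_mul_herm (k l : ℕ) (hkl : k ≠ l) :
    ∫ x : ℝ, (herm k * herm l).eval (x : ℂ) * gw x = 0 := by
  rcases lt_or_gt_of_ne hkl with h | h
  · rw [mul_comm]; exact integral_herm_mul_herm_of_lt l k h
  · exact integral_herm_mul_herm_of_lt k l h

/-! ### Characteristic matrices, adjugates and their Hermite coefficients -/

section CharMatrix
variable {N : ℕ}

theorem eval_charmatrix (A : Matrix (Fin N) (Fin N) ℂ) (w : ℂ) :
    (Polynomial.evalRingHom w).mapMatrix (charmatrix A) = w • 1 - A := by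
  ext i j
  by_cases h : i = j
  · subst h; simp
  · simp [h, charmatrix_apply_ne]

theorem eval_adj (A : Matrix (Fin N) (Fin N) ℂ) (w : ℂ) (i j : Fin N) :
    ((charmatrix A).adjugate i j).eval w = (w • 1 - A).adjugate i j := by
  rw [← eval_charmatrix, ← RingHom.map_adjugate]
  rfl

theorem eval_charp (A : Matrix (Fin N) (Fin N) ℂ) (w : ℂ) :
    A.charpoly.eval w = (w • 1 - A).det := by
  rw [← eval_charmatrix, ← RingHom.map_det]
  rfl

/-- The sharp bound for `N > 0` is `N - 1`. The bound `N` suffices here, and it holds because the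
matrix whose determinant is an adjugate entry is again of the form `w B + C`. -/
theorem natDegree_adj_le (A : Matrix (Fin N) (Fin N) ℂ) (i j : Fin N) :
    ((charmatrix A).adjugate i j).natDegree ≤ N := by
  rw [adjugate_apply]
  have := Polynomial.natDegree_det_X_add_C_le
    ((1 : Matrix (Fin N) (Fin N) ℂ).updateRow j 0) ((-A).updateRow j (Pi.single i 1))
  rw [Fintype.card_fin] at this
  convert this using 3
  ext1 r s
  by_cases hr : r = j
  · subst hr
    simp [Pi.single_apply, apply_ite]
  · by_cases h : r = s
    · subst h; simp [hr, sub_eq_add_neg]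
    · simp [hr, h, charmatrix_apply_ne]

theorem natDegree_charp_le (A : Matrix (Fin N) (Fin N) ℂ) : A.charpoly.natDegree ≤ N := by
  rw [charpoly_natDegree_eq_dim, Fintype.card_fin]

/-- The coefficient of `w ^ m` in `exp (x w - w² / 2) adj (w I - A)`. -/
noncomputable def hermAdj (A : Matrix (Fin N) (Fin N) ℂ) (m : ℕ) (x : ℂ) : Matrix (Fin N) (Fin N) ℂ :=
  fun i j => (hermConv m ((charmatrix A).adjugate i j)).eval x

/-- The `x`-derivative of `hermAdj A m`. -/
noncomputable def hermAdjDeriv (A : Matrix (Fin N) (Fin N) ℂ) (m : ℕ) (x : ℂ) : Matrix (Fin N) (Fin N) ℂ :=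
  fun i j => (hermConv m ((charmatrix A).adjugate i j)).derivative.eval x

theorem charmatrix_expand (A : Matrix (Fin N) (Fin N) ℂ) :
    charmatrix A = (Polynomial.X : Polynomial ℂ) • 1 - A.map Polynomial.C := by
  ext1 i j
  by_cases h : i = j
  · subst h; simp
  · simp [h, charmatrix_apply_ne]

/-- The coefficient of `w ^ m` in `exp (x w - w² / 2)` times the identity
`adj (w I - A) (w I - A) = det (w I - A) I`. -/
theorem hermAdjDeriv_sub_mul_right (A : Matrix (Fin N) (Fin N) ℂ) (m : ℕ) (x : ℂ) :
    hermAdjDeriv A m x - hermAdj A m x * A = (hermConv m A.charpoly).eval x • 1 := by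
  ext i j
  have h := congrFun (congrFun (adjugate_mul (charmatrix A)) i) j
  rw [charmatrix_expand, mul_sub, Matrix.mul_smul, mul_one, ← charmatrix_expand] at h
  have h2 := congrArg (fun p => (hermConv m p).eval x) h
  simp only [Matrix.sub_apply, Matrix.smul_apply, smul_eq_mul, map_sub, hermConv_X_mul,
    Polynomial.eval_sub, Matrix.mul_apply, Matrix.map_apply, map_sum,
    Polynomial.eval_finsetSum] at h2
  simp only [mul_comm _ (Polynomial.C _), ← Polynomial.smul_eq_C_mul, map_smul,
    Polynomial.eval_smul] at h2
  simp only [Matrix.sub_apply, Matrix.smul_apply, Matrix.mul_apply, hermAdj, hermAdjDeriv]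
  by_cases hij : i = j
  · subst hij
    simpa [charpoly, mul_comm] using h2
  · simpa [charpoly, mul_comm, hij] using h2

/-- The coefficient of `w ^ m` in `exp (x w - w² / 2)` times the identity
`(w I - A) adj (w I - A) = det (w I - A) I`. -/
theorem hermAdjDeriv_sub_left_mul (A : Matrix (Fin N) (Fin N) ℂ) (m : ℕ) (x : ℂ) :
    hermAdjDeriv A m x - A * hermAdj A m x = (hermConv m A.charpoly).eval x • 1 := by
  ext i j
  have h := congrFun (congrFun (mul_adjugate (charmatrix A)) i) j
  rw [charmatrix_expand, sub_mul, Matrix.smul_mul, one_mul, ← charmatrix_expand] at h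
  have h2 := congrArg (fun p => (hermConv m p).eval x) h
  simp only [Matrix.sub_apply, Matrix.smul_apply, smul_eq_mul, map_sub, hermConv_X_mul,
    Polynomial.eval_sub, Matrix.mul_apply, Matrix.map_apply, map_sum,
    Polynomial.eval_finsetSum] at h2
  simp only [← Polynomial.smul_eq_C_mul, map_smul, Polynomial.eval_smul] at h2
  simp only [Matrix.sub_apply, Matrix.smul_apply, Matrix.mul_apply, hermAdj, hermAdjDeriv]
  by_cases hij : i = j
  · subst hij
    simpa [charpoly, mul_comm] using h2
  · simpa [charpoly, mul_comm, hij] using h2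


/-- The coefficients of the wave functions: `f m` is the case `A = X`, `α = a`, `β = R b` and `g n`
the case `A = Z`, `α = aᵀ R`, `β = b`, where `R = (x I - X - Z)⁻¹`. -/
theorem taylorCoeff_wave (A : Matrix (Fin N) (Fin N) ℂ) (α β : Fin N → ℂ) (x : ℂ) (m : ℕ) :
    taylorCoeff m (fun w => Complex.exp (x * w - w ^ 2 / 2) *
      ((w • (1 : Matrix (Fin N) (Fin N) ℂ) - A).det
        + α ⬝ᵥ ((w • (1 : Matrix (Fin N) (Fin N) ℂ) - A).adjugate).mulVec β)) =
      (hermConv m A.charpoly).eval x + α ⬝ᵥ (hermAdj A m x).mulVec β := by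
  have h := taylorCoeff_E_mul x m (A.charpoly + ∑ i, ∑ j, (α i * β j) • (charmatrix A).adjugate i j)
  simp only [Polynomial.eval_add, map_add, map_sum, map_smul, Polynomial.eval_finsetSum,
    Polynomial.eval_smul, eval_adj, eval_charp] at h
  convert h using 1
  · congr 1
    funext w
    simp only [dotProduct, mulVec, Finset.mul_sum, smul_eq_mul]
    congr 2
    refine Finset.sum_congr rfl fun i _ => Finset.sum_congr rfl fun j _ => ?_
    ring
  · simp only [dotProduct, mulVec, Finset.mul_sum, smul_eq_mul, hermAdj]
    congr! 3
    ring

/-! ### The resolvent on the real line -/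

section Resolvent
attribute [local instance] Matrix.linftyOpNormedRing Matrix.linftyOpNormedAlgebra

theorem inv_eq_resolvent (A : Matrix (Fin N) (Fin N) ℂ) (x : ℂ) :
    (x • 1 - A)⁻¹ = resolvent A x := by
  rw [nonsing_inv_eq_ringInverse, resolvent, Algebra.algebraMap_eq_smul_one]

theorem continuousLinear_entry (i j : Fin N) :
    ∃ L : Matrix (Fin N) (Fin N) ℂ →L[ℂ] ℂ, ∀ M, L M = M i j :=
  ⟨LinearMap.toContinuousLinearMap (Matrix.entryLinearMap ℂ ℂ i j), fun _ => rfl⟩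

theorem hasDerivAt_inv_entry (A : Matrix (Fin N) (Fin N) ℂ) (x : ℝ)
    (h : IsUnit ((x : ℂ) • (1 : Matrix (Fin N) (Fin N) ℂ) - A)) (i j : Fin N) :
    HasDerivAt (fun t : ℝ => ((t : ℂ) • (1 : Matrix (Fin N) (Fin N) ℂ) - A)⁻¹ i j)
      ((-(((x : ℂ) • (1 : Matrix (Fin N) (Fin N) ℂ) - A)⁻¹ *
        ((x : ℂ) • (1 : Matrix (Fin N) (Fin N) ℂ) - A)⁻¹)) i j) x := by
  have hk : (x : ℂ) ∈ resolventSet ℂ A := by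
    rwa [spectrum.mem_resolventSet_iff, Algebra.algebraMap_eq_smul_one]
  obtain ⟨L, hL⟩ := continuousLinear_entry i j
  have := (L.hasFDerivAt.comp_hasDerivAt (x : ℂ)
    (spectrum.hasDerivAt_resolvent_const_left hk)).comp_ofReal
  simp only [Function.comp_def, hL, sq] at this
  simp only [inv_eq_resolvent]
  convert! this using 1
  exact (hL _).symm

theorem tendsto_inv_entry (A : Matrix (Fin N) (Fin N) ℂ) (i j : Fin N) :
    Filter.Tendsto (fun t : ℝ => ((t : ℂ) • (1 : Matrix (Fin N) (Fin N) ℂ) - A)⁻¹ i j)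
      (Filter.cocompact ℝ) (nhds 0) := by
  obtain ⟨L, hL⟩ := continuousLinear_entry i j
  have h1 := spectrum.resolvent_tendsto_cobounded (𝕜 := ℂ) A
  have h2 : Filter.Tendsto (fun t : ℝ => (t : ℂ)) (Filter.cocompact ℝ)
      (Bornology.cobounded ℂ) := by
    rw [Metric.cobounded_eq_cocompact]
    exact Complex.isometry_ofReal.isClosedEmbedding.tendsto_cocompact
  have h3 := ((L.continuous.tendsto 0).comp h1).comp h2
  rw [map_zero] at h3
  refine h3.congr fun t => ?_
  simp only [Function.comp_apply, hL, inv_eq_resolvent]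

end Resolvent

/-! ### The product of two wave functions -/

/-- The algebraic heart: the product of two coefficients is the Hermite part plus `h' - x h`, where
`h = aᵀ P R V b`. Here `P`, `V` stand for coefficients of the two adjugates, `P'`, `V'` for their
`x`-derivatives, and `-R²` is the derivative of `R = (x I - X - Z)⁻¹`. The rank-one condition
replaces `b aᵀ` between the two factors by `[X, Z] - I`, and `[X, Z] = [Z, x I - X - Z]` turns
`R [X, Z] R` into `R Z - Z R`. -/
theorem key_identity (X Z R P P' V V' : Matrix (Fin N) (Fin N) ℂ) (a b : Fin N → ℂ) (x u v : ℂ)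
    (hrank : X * Z - Z * X - 1 = Matrix.vecMulVec b a)
    (hR : R * (x • 1 - X - Z) = 1) (hR' : (x • 1 - X - Z) * R = 1)
    (hP : P' - P * X = u • 1) (hV : V' - Z * V = v • 1) :
    (u + a ⬝ᵥ (P * R).mulVec b) * (v + a ⬝ᵥ (R * V).mulVec b) =
      (u * v + a ⬝ᵥ (P * V).mulVec b) +
      (a ⬝ᵥ (P' * R * V + P * R * V' - P * (R * R) * V).mulVec b -
        x * a ⬝ᵥ (P * R * V).mulVec b) := by
  have hprod : (a ⬝ᵥ (P * R).mulVec b) * (a ⬝ᵥ (R * V).mulVec b) =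
      a ⬝ᵥ (P * R * (X * Z - Z * X - 1) * (R * V)).mulVec b := by
    rw [hrank, ← mulVec_mulVec b (P * R * _), ← mulVec_mulVec _ (P * R), vecMulVec_mulVec, mulVec_smul, dotProduct_smul]
    simp [mul_comm]
  have hcomm : R * (X * Z - Z * X) * R = R * Z - Z * R := by
    have : X * Z - Z * X = Z * (x • 1 - X - Z) - (x • 1 - X - Z) * Z := by
      simp only [mul_sub, sub_mul, Matrix.mul_smul, Matrix.smul_mul, mul_one, one_mul]
      abel
    rw [this, mul_sub, sub_mul, mul_assoc, mul_assoc Z, hR', mul_one, ← mul_assoc R _ Z, hR,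
      one_mul]
  have hM : X * R + Z * R = x • R - 1 := by
    rw [← hR']
    simp only [sub_mul, Matrix.smul_mul, one_mul]
    abel
  have h1 : u * (a ⬝ᵥ (R * V).mulVec b) = a ⬝ᵥ ((P' - P * X) * (R * V)).mulVec b := by
    rw [hP]; simp [smul_mulVec]
  have h2 : v * (a ⬝ᵥ (P * R).mulVec b) = a ⬝ᵥ ((P * R) * (V' - Z * V)).mulVec b := by
    rw [hV]; simp [smul_mulVec]
  have hmat : (P' - P * X) * (R * V) + (P * R) * (V' - Z * V) +
      P * R * (X * Z - Z * X - 1) * (R * V) =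
      P * V + ((P' * R * V + P * R * V' - P * (R * R) * V) - x • (P * R * V)) := by
    have e1 : P * R * (X * Z - Z * X - 1) * (R * V) =
        P * (R * (X * Z - Z * X) * R) * V - P * (R * R) * V := by noncomm_ring
    have e2 : x • (P * R * V) = P * (x • R) * V := by simp
    have e3 : x • R = X * R + Z * R + 1 := by rw [hM]; abel
    rw [e1, hcomm, e2, e3]
    noncomm_ring
  have hfin := congrArg (fun M => a ⬝ᵥ M.mulVec b) hmat
  simp only [add_mulVec, dotProduct_add, sub_mulVec (P' * R * V + P * R * V' - P * (R * R) * V),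
    dotProduct_sub, smul_mulVec, dotProduct_smul, smul_eq_mul, ← h1, ← h2, ← hprod] at hfin
  simp only [add_mulVec, dotProduct_add, sub_mulVec, dotProduct_sub] at hfin ⊢
  linear_combination hfin

theorem hasDerivAt_mul_entry {A B : ℝ → Matrix (Fin N) (Fin N) ℂ}
    {A' B' : Matrix (Fin N) (Fin N) ℂ} {x : ℝ}
    (hA : ∀ i j, HasDerivAt (fun t => A t i j) (A' i j) x)
    (hB : ∀ i j, HasDerivAt (fun t => B t i j) (B' i j) x) (i j : Fin N) :
    HasDerivAt (fun t => (A t * B t) i j) ((A' * B x + A x * B') i j) x := by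
  simp only [Matrix.mul_apply, Matrix.add_apply, ← Finset.sum_add_distrib]
  exact HasDerivAt.fun_sum fun k _ => (hA i k).mul (hB k j)

theorem hasDerivAt_bilin {A : ℝ → Matrix (Fin N) (Fin N) ℂ}
    {A' : Matrix (Fin N) (Fin N) ℂ} {x : ℝ}
    (hA : ∀ i j, HasDerivAt (fun t => A t i j) (A' i j) x) (a b : Fin N → ℂ) :
    HasDerivAt (fun t => a ⬝ᵥ (A t).mulVec b) (a ⬝ᵥ A'.mulVec b) x := by
  simp only [dotProduct, mulVec]
  exact HasDerivAt.fun_sum fun i _ =>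
    (HasDerivAt.fun_sum fun j _ => (hA i j).mul_const (b j)).const_mul (a i)

/-! ### Integrating the Hermite part -/

theorem sum_hermConv_mul_hermConv {ι : Type*} [Fintype ι] (p p' : ι → Polynomial ℂ) (m n : ℕ) :
    ∑ t, hermConv m (p t) * hermConv n (p' t) =
      ∑ α ∈ Finset.HasAntidiagonal.antidiagonal m, ∑ β ∈ Finset.HasAntidiagonal.antidiagonal n,
        (∑ t, (p t).coeff α.1 * (p' t).coeff β.1) • (herm α.2 * herm β.2) := by
  simp only [hermConv_apply, Finset.sum_mul_sum, Finset.sum_smul]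
  rw [Finset.sum_comm]
  refine Finset.sum_congr rfl fun α _ => ?_
  rw [Finset.sum_comm]
  refine Finset.sum_congr rfl fun β _ => Finset.sum_congr rfl fun t _ => ?_
  rw [smul_mul_smul_comm]

/-- The mixed Taylor coefficients of a finite sum of products `p(w) p'(z)` of polynomials. -/
theorem double_coeff {ι : Type*} [Fintype ι] (p p' : ι → Polynomial ℂ) (i j : ℕ) :
    (1 / ((i.factorial : ℂ) * (j.factorial : ℂ))) *
        iteratedDeriv i (fun w : ℂ =>
          iteratedDeriv j (fun z : ℂ => ∑ t, (p t).eval w * (p' t).eval z) 0) 0 =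
      ∑ t, (p t).coeff i * (p' t).coeff j := by
  have key : ∀ (q : Polynomial ℂ) (k : ℕ),
      iteratedDeriv k (fun w => q.eval w) 0 = (k.factorial : ℂ) * q.coeff k := by
    intro q k
    have := Nat.cast_ne_zero (R := ℂ).2 k.factorial_ne_zero
    rw [← taylorCoeff_eval, taylorCoeff]
    field_simp
  have h1 : ∀ w : ℂ, iteratedDeriv j (fun z : ℂ => ∑ t, (p t).eval w * (p' t).eval z) 0 =
      (((j.factorial : ℂ) • ∑ t, (p' t).coeff j • p t : Polynomial ℂ)).eval w := by
    intro w
    have := key (∑ t, (p t).eval w • p' t) j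
    simp only [Polynomial.eval_finsetSum, Polynomial.eval_smul, smul_eq_mul,
      Polynomial.finsetSum_coeff, Polynomial.coeff_smul] at this ⊢
    rw [this]
    simp [mul_comm]
  simp only [h1]
  rw [key]
  have := Nat.cast_ne_zero (R := ℂ).2 i.factorial_ne_zero
  have := Nat.cast_ne_zero (R := ℂ).2 j.factorial_ne_zero
  simp only [smul_eq_mul, Polynomial.finsetSum_coeff, Polynomial.coeff_smul]
  field_simp
  simp [mul_comm]

/-- By orthogonality only the terms `w ^ i z ^ j` with `m - i = n - j` contribute to the integral. -/
theorem integral_sum_hermConv_mul_hermConv {ι : Type*} [Fintype ι] (p p' : ι → Polynomial ℂ) (m n : ℕ)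
    (h : ∀ i j : ℕ, (m : ℤ) - n = (i : ℤ) - j → ∑ t, (p t).coeff i * (p' t).coeff j = 0) :
    ∫ x : ℝ, (∑ t, hermConv m (p t) * hermConv n (p' t)).eval (x : ℂ) * gw x = 0 := by
  simp only [sum_hermConv_mul_hermConv, Polynomial.eval_finsetSum, Finset.sum_mul]
  rw [integral_finsetSum]
  · refine Finset.sum_eq_zero fun α hα => ?_
    rw [integral_finsetSum]
    · refine Finset.sum_eq_zero fun β hβ => ?_
      by_cases hc : α.2 = β.2
      · rw [h α.1 β.1]
        · simp
        · rw [Finset.HasAntidiagonal.mem_antidiagonal] at hα hβ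
          omega
      · have := integral_herm_mul_herm _ _ hc
        simp only [Polynomial.eval_smul, smul_eq_mul, mul_assoc]
        rw [integral_const_mul, this, mul_zero]
    · exact fun β _ => integrable_eval_mul_gw _
  · exact fun α _ => integrable_finsetSum _ fun β _ => integrable_eval_mul_gw _

end CharMatrix

/-! ### Almost bi-orthogonality -/

/-- Almost bi-orthogonality: the coefficient sequences `f̂_m` and `ĝ_n` generated by the
normalized wave functions `ψ̂_{𝒳^♭}(x,−1/2,w)` and `ψ̂_𝒳(x,−1/2,z)` satisfy
`⟨f̂_m, ĝ_n⟩_H = 0` whenever `m − n ≠ i − j` for every pair `(i,j)` with nonzero coefficient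
`c_{ij}` of the polynomial part of the doubly-normalized wave function at second time `0`. -/
theorem almost_biorthogonality {N : ℕ} (hN : 0 < N)
    (X Z : Matrix (Fin N) (Fin N) ℂ) (a b : Fin N → ℂ)
    (hrank : X * Z - Z * X - 1 = Matrix.vecMulVec b a)
    (hXZ : ∀ x : ℝ, IsUnit ((x : ℂ) • (1 : Matrix (Fin N) (Fin N) ℂ) - X - Z))
    (f g : ℕ → ℝ → ℂ)
    (hf : ∀ (m : ℕ) (x : ℝ), f m x = (1 / (m.factorial : ℂ)) *
      iteratedDeriv m (fun w : ℂ => Complex.exp ((x : ℂ) * w - w ^ 2 / 2) *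
        ((w • (1 : Matrix (Fin N) (Fin N) ℂ) - X).det
          + a ⬝ᵥ ((w • (1 : Matrix (Fin N) (Fin N) ℂ) - X).adjugate
              * ((x : ℂ) • 1 - X - Z)⁻¹).mulVec b)) 0)
    (hg : ∀ (n : ℕ) (x : ℝ), g n x = (1 / (n.factorial : ℂ)) *
      iteratedDeriv n (fun z : ℂ => Complex.exp ((x : ℂ) * z - z ^ 2 / 2) *
        ((z • (1 : Matrix (Fin N) (Fin N) ℂ) - Z).det
          + a ⬝ᵥ (((x : ℂ) • (1 : Matrix (Fin N) (Fin N) ℂ) - X - Z)⁻¹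
              * (z • 1 - Z).adjugate).mulVec b)) 0)
    (Q : ℂ → ℂ → ℂ)
    (hQ : ∀ w z : ℂ, Q w z =
      (w • (1 : Matrix (Fin N) (Fin N) ℂ) - X).det * (z • (1 : Matrix (Fin N) (Fin N) ℂ) - Z).det
        + a ⬝ᵥ ((w • (1 : Matrix (Fin N) (Fin N) ℂ) - X).adjugate
            * (z • (1 : Matrix (Fin N) (Fin N) ℂ) - Z).adjugate).mulVec b)
    (m n : ℕ)
    (hmn : ∀ i j : ℕ, i ≤ N → j ≤ N →
      (1 / ((i.factorial : ℂ) * (j.factorial : ℂ))) *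
        iteratedDeriv i (fun w : ℂ => iteratedDeriv j (fun z : ℂ => Q w z) 0) 0 ≠ 0 →
      (m : ℤ) - (n : ℤ) ≠ (i : ℤ) - (j : ℤ)) :
    ∫ x : ℝ, f m x * g n x * Complex.exp (-(x : ℂ) ^ 2 / 2) = 0 := by
  -- The products `p t (w) * p' t (z)` are the rank-one terms of `Q`: one for the product of
  -- determinants, one for each monomial of the bilinear form.
  let p : Option (Fin N × Fin N × Fin N) → Polynomial ℂ := fun t => match t with
    | none => X.charpoly
    | some (r, s, _) => a r • (charmatrix X).adjugate r s
  let p' : Option (Fin N × Fin N × Fin N) → Polynomial ℂ := fun t => match t with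
    | none => Z.charpoly
    | some (_, s, t) => b t • (charmatrix Z).adjugate s t
  have hp : ∀ t, (p t).natDegree ≤ N := by
    rintro (_ | ⟨r, s, t⟩)
    · exact natDegree_charp_le X
    · exact (Polynomial.natDegree_smul_le _ _).trans (natDegree_adj_le X r s)
  have hp' : ∀ t, (p' t).natDegree ≤ N := by
    rintro (_ | ⟨r, s, t⟩)
    · exact natDegree_charp_le Z
    · exact (Polynomial.natDegree_smul_le _ _).trans (natDegree_adj_le Z s t)
  have hQp : ∀ w z, Q w z = ∑ t, (p t).eval w * (p' t).eval z := by
    intro w z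
    rw [hQ, Fintype.sum_option, Fintype.sum_prod_type]
    simp only [p, p', Fintype.sum_prod_type, eval_charp, Polynomial.eval_smul, eval_adj,
      smul_eq_mul, dotProduct, mulVec, Matrix.mul_apply, Finset.mul_sum, Finset.sum_mul]
    congr 1
    refine Finset.sum_congr rfl fun r _ => ?_
    rw [Finset.sum_comm]
    refine Finset.sum_congr rfl fun s _ => Finset.sum_congr rfl fun t _ => ?_
    ring
  have hc : ∀ i j : ℕ, (m : ℤ) - n = (i : ℤ) - j → ∑ t, (p t).coeff i * (p' t).coeff j = 0 := by
    intro i j hij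
    by_cases hi : i ≤ N
    · by_cases hj : j ≤ N
      · by_contra hne
        refine hmn i j hi hj ?_ hij
        simp only [hQp]
        rwa [double_coeff]
      · refine Finset.sum_eq_zero fun t _ => ?_
        rw [Polynomial.coeff_eq_zero_of_natDegree_lt ((hp' t).trans_lt (not_le.1 hj)), mul_zero]
    · refine Finset.sum_eq_zero fun t _ => ?_
      rw [Polynomial.coeff_eq_zero_of_natDegree_lt ((hp t).trans_lt (not_le.1 hi)), zero_mul]
  have hint := integral_sum_hermConv_mul_hermConv p p' m n hc
  have hqint := integrable_eval_mul_gw (∑ t, hermConv m (p t) * hermConv n (p' t))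
  set q : Polynomial ℂ := ∑ t, hermConv m (p t) * hermConv n (p' t) with hq
  have hqe : ∀ x : ℝ, q.eval (x : ℂ) = (hermConv m X.charpoly).eval (x : ℂ) * (hermConv n Z.charpoly).eval (x : ℂ)
      + a ⬝ᵥ (hermAdj X m x * hermAdj Z n x).mulVec b := by
    intro x
    rw [hq, Fintype.sum_option, Fintype.sum_prod_type]
    simp only [p, p', hermAdj, Fintype.sum_prod_type, Polynomial.eval_add, Polynomial.eval_finsetSum,
      map_smul, Polynomial.eval_mul, Polynomial.eval_smul,
      smul_eq_mul, dotProduct, mulVec, Matrix.mul_apply, Finset.mul_sum, Finset.sum_mul]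
    congr 1
    refine Finset.sum_congr rfl fun r _ => ?_
    rw [Finset.sum_comm]
    refine Finset.sum_congr rfl fun s _ => Finset.sum_congr rfl fun t _ => ?_
    ring
  let R : ℝ → Matrix (Fin N) (Fin N) ℂ := fun x =>
    ((x : ℂ) • (1 : Matrix (Fin N) (Fin N) ℂ) - X - Z)⁻¹
  have hfx : ∀ x : ℝ, f m x =
      (hermConv m X.charpoly).eval (x : ℂ) + a ⬝ᵥ (hermAdj X m x * R x).mulVec b := by
    intro x
    rw [hf, ← mulVec_mulVec, ← taylorCoeff_wave, taylorCoeff]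
    simp only [mulVec_mulVec, R]
  have hgx : ∀ x : ℝ, g n x =
      (hermConv n Z.charpoly).eval (x : ℂ) + a ⬝ᵥ (R x * hermAdj Z n x).mulVec b := by
    intro x
    rw [hg, ← mulVec_mulVec, dotProduct_mulVec, ← taylorCoeff_wave, taylorCoeff]
    simp only [← dotProduct_mulVec, mulVec_mulVec, R]
  -- `h * gw` is the primitive of the non-Hermite part of the integrand.
  let h : ℝ → ℂ := fun x => a ⬝ᵥ (hermAdj X m x * R x * hermAdj Z n x).mulVec b
  let h' : ℝ → ℂ := fun x => a ⬝ᵥ (hermAdjDeriv X m x * R x * hermAdj Z n x + hermAdj X m x * R x * hermAdjDeriv Z n x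
    - hermAdj X m x * (R x * R x) * hermAdj Z n x).mulVec b
  have hh : ∀ x, HasDerivAt h (h' x) x := by
    intro x
    have hR : ∀ i j, HasDerivAt (fun t => R t i j) ((-(R x * R x)) i j) x := by
      intro i j
      simp only [R, sub_sub]
      exact hasDerivAt_inv_entry (X + Z) x (by rw [← sub_sub]; exact hXZ x) i j
    have hU : ∀ (A : Matrix (Fin N) (Fin N) ℂ) (k : ℕ) (i j : Fin N),
        HasDerivAt (fun t : ℝ => hermAdj A k (t : ℂ) i j) (hermAdjDeriv A k x i j) x :=
      fun A k i j => hasDerivAt_eval _ x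
    convert! hasDerivAt_bilin
      (hasDerivAt_mul_entry (hasDerivAt_mul_entry (hU X m) hR) (hU Z n)) a b using 1
    simp only [h']
    congr 2
    noncomm_ring
  have hfg : ∀ x : ℝ, f m x * g n x = q.eval (x : ℂ) + (h' x - (x : ℂ) * h x) := by
    intro x
    have hdet := (Matrix.isUnit_iff_isUnit_det _).1 (hXZ x)
    rw [hfx, hgx, hqe]
    exact key_identity X Z (R x) (hermAdj X m x) (hermAdjDeriv X m x) (hermAdj Z n x) (hermAdjDeriv Z n x) a b x _ _ hrank
      (nonsing_inv_mul _ hdet) (mul_nonsing_inv _ hdet) (hermAdjDeriv_sub_mul_right X m x) (hermAdjDeriv_sub_left_mul Z n x)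
  have htend : Filter.Tendsto (fun x => h x * gw x) (Filter.cocompact ℝ) (nhds 0) := by
    have : ∀ x : ℝ, h x * gw x = ∑ i, ∑ j, ∑ k, ∑ l, R x k l *
        ((((a i * b j) • (hermConv m ((charmatrix X).adjugate i k) *
          hermConv n ((charmatrix Z).adjugate l j)) : Polynomial ℂ)).eval (x : ℂ) * gw x) := by
      intro x
      simp only [h, hermAdj, dotProduct, mulVec, Matrix.mul_apply, Finset.mul_sum, Finset.sum_mul]
      refine Finset.sum_congr rfl fun i _ => Finset.sum_congr rfl fun j _ => ?_
      rw [Finset.sum_comm]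
      refine Finset.sum_congr rfl fun k _ => Finset.sum_congr rfl fun l _ => ?_
      simp only [Polynomial.eval_smul, Polynomial.eval_mul, smul_eq_mul]
      ring
    simp only [this]
    rw [show (0 : ℂ) = ∑ i : Fin N, ∑ j : Fin N, ∑ k : Fin N, ∑ l : Fin N, 0 * 0 by simp]
    refine tendsto_finsetSum _ fun i _ => tendsto_finsetSum _ fun j _ =>
      tendsto_finsetSum _ fun k _ => tendsto_finsetSum _ fun l _ => ?_
    refine Filter.Tendsto.mul ?_ (tendsto_eval_mul_gw _)
    simp only [R, sub_sub]
    exact tendsto_inv_entry (X + Z) k l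
  rw [cocompact_eq_atBot_atTop] at htend
  change ∫ x : ℝ, f m x * g n x * gw x = 0
  -- A non-integrable integrand has Bochner integral `0` by convention.
  -- Only the integrable case needs the fundamental theorem of calculus.
  by_cases hI : Integrable (fun x : ℝ => f m x * g n x * gw x)
  · have hd : ∀ x, HasDerivAt (fun x => h x * gw x)
        (f m x * g n x * gw x - q.eval (x : ℂ) * gw x) x := by
      intro x
      convert! (hh x).mul (hasDerivAt_gw x) using 1
      rw [hfg]
      ring
    have hz := integral_of_hasDerivAt_of_tendsto hd (hI.sub hqint)
      (htend.mono_left le_sup_left) (htend.mono_left le_sup_right)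
    rw [integral_sub hI hqint, hint] at hz
    simpa using hz
  · exact integral_undef hI
end
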